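/- For every integer k ≥ 0, define Λ_k(φ₆) = ω₄ ∫_{−1}^{1} (C_k^2(t)/C_k^2(1)) φ₆(t)(1−t²)^{3/2} dt with φ₆(t) = 4(1−t)^{1/2}(1+t)^{3/2}. Then (1/(4ω₄))·binom(k+3,3)·Λ_k(φ₆) equals −8(k+2)/((k−1)(k+1)(k+3)(k+5)) for k even and −8(k+1)(k+3)/(k(k−2)(k+2)(k+4)(k+6)) for k odd. In particular Λ₀(φ₆) > 0, Λ₁(φ₆) > 0, and Λ_k(φ₆) < 0 for all k ≥ 2. -/

import Mathlib

/-- `C` is the family of Gegenbauer (ultraspherical) polynomials with parameter `α`,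
characterized by the generating function `(1 - 2rt + r²)^(-α) = Σ_k C_k^α(t) r^k`
for `t ∈ [-1, 1]` and `|r|` small. -/
def IsGegenbauer (α : ℝ) (C : ℕ → Polynomial ℝ) : Prop :=
  ∀ t ∈ Set.Icc (-1:ℝ) 1, ∀ r : ℝ, |r| < 1/2 →
    HasSum (fun k : ℕ => (C k).eval t * r ^ k) ((1 - 2*r*t + r^2) ^ (-α))

/-- The weight `φ₆(t) = 4 (1-t)^{1/2} (1+t)^{3/2}`. -/
noncomputable def phi6 (t : ℝ) : ℝ := 4 * Real.sqrt (1 - t) * (1 + t) ^ ((3:ℝ)/2)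

/-- The Funk–Hecke coefficient `Λ_k(φ₆)` in dimension `d = 6`, with `ω₄ = 8π²/3`. -/
noncomputable def Lambda6 (C : ℕ → Polynomial ℝ) (k : ℕ) : ℝ :=
  (8 * Real.pi ^ 2 / 3) *
    ∫ t in (-1:ℝ)..1, ((C k).eval t / (C k).eval 1) * phi6 t * (1 - t^2) ^ ((3:ℝ)/2)

/-- Shifting a power series. -/
lemma fh_hasSum_X_mul (c : PowerSeries ℝ) (r S : ℝ)
    (h : HasSum (fun k => PowerSeries.coeff k c * r ^ k) S) :
    HasSum (fun k => PowerSeries.coeff k (PowerSeries.X * c) * r ^ k) (r * S) := by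
  have h1 := (hasSum_nat_add_iff (f := fun k => PowerSeries.coeff k (PowerSeries.X * c) * r ^ k)
    (g := r * S) 1).1 (by
      have h0 := h.mul_left r
      have e : (fun n => PowerSeries.coeff (n + 1) (PowerSeries.X * c) * r ^ (n + 1))
          = fun n => r * (PowerSeries.coeff n c * r ^ n) := by
        funext n
        rw [PowerSeries.coeff_succ_X_mul]
        ring
      simpa only [e] using h0)
  simpa using h1

/-- Multiplying by `1 - 2tX + X²`. -/
lemma fh_hasSum_P_mul (c : PowerSeries ℝ) (t r S : ℝ)
    (h : HasSum (fun k => PowerSeries.coeff k c * r ^ k) S) :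
    HasSum (fun k => PowerSeries.coeff k
      ((1 - PowerSeries.C (2 * t) * PowerSeries.X + PowerSeries.X ^ 2) * c) * r ^ k)
      ((1 - 2 * r * t + r ^ 2) * S) := by
  have h1 := fh_hasSum_X_mul c r S h
  have h2 := fh_hasSum_X_mul _ r _ h1
  have h3 := (h.sub (h1.mul_left (2 * t))).add h2
  have e2 : (1 - 2 * r * t + r ^ 2) * S = S - 2 * t * (r * S) + r * (r * S) := by ring
  rw [e2]
  refine Eq.mp (congrArg (fun f : ℕ → ℝ => HasSum f _) (funext fun k => ?_)) h3
  · symm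
    have : (1 - PowerSeries.C (2 * t) * PowerSeries.X + PowerSeries.X ^ 2) * c
      = c - PowerSeries.C (2 * t) * (PowerSeries.X * c)
        + PowerSeries.X * (PowerSeries.X * c) := by ring
    rw [this]
    simp only [map_add, map_sub, PowerSeries.coeff_C_mul]
    ring

lemma fh_unique (a : PowerSeries ℝ)
    (h : ∀ r : ℝ, |r| < 1/2 → HasSum (fun k => PowerSeries.coeff k a * r ^ k) 1) : a = 1 := by
  have ev : ∀ᶠ z : ℝ in nhds 0, |z| < 1/2 := by
    have : Continuous fun z : ℝ => |z| := continuous_abs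
    exact this.continuousAt.eventually_lt continuousAt_const (by norm_num)
  have key : ∀ b : PowerSeries ℝ,
      (∀ r : ℝ, |r| < 1/2 → HasSum (fun k => PowerSeries.coeff k b * r ^ k) 1) →
      HasFPowerSeriesAt (fun _ : ℝ => (1:ℝ))
        (FormalMultilinearSeries.ofScalars ℝ (fun k => PowerSeries.coeff k b)) 0 := by
    intro b hb
    rw [hasFPowerSeriesAt_iff]
    filter_upwards [ev] with z hz
    simpa [FormalMultilinearSeries.coeff_ofScalars, mul_comm] using hb z hz
  have h1 : ∀ r : ℝ, |r| < 1/2 →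
      HasSum (fun k => PowerSeries.coeff k (1 : PowerSeries ℝ) * r ^ k) 1 := by
    intro r _
    have := hasSum_ite_eq (0:ℕ) (1:ℝ)
    convert this using 1
    ext k
    rw [PowerSeries.coeff_one]
    split_ifs with hk <;> simp [hk]
  have e := (key a h).eq_formalMultilinearSeries (key 1 h1)
  ext k
  have := congrArg (fun p => FormalMultilinearSeries.coeff p k) e
  simpa only [FormalMultilinearSeries.coeff_ofScalars] using this

open Polynomial Polynomial.Chebyshev in
lemma fh_C_eq (C : ℕ → Polynomial ℝ) (hC : IsGegenbauer 2 C) (k : ℕ) (t : ℝ)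
    (ht : t ∈ Set.Icc (-1:ℝ) 1) :
    (C k).eval t = (derivative (U ℝ ((k:ℤ) + 1))).eval t / 2 := by
  set P : PowerSeries ℝ := 1 - PowerSeries.C (2 * t) * PowerSeries.X + PowerSeries.X ^ 2 with hP
  set c : PowerSeries ℝ := PowerSeries.mk fun k => (C k).eval t with hc
  set d : PowerSeries ℝ := PowerSeries.mk fun k =>
    (derivative (U ℝ ((k:ℤ) + 1))).eval t / 2 with hd
  set u : PowerSeries ℝ := PowerSeries.mk fun k => (U ℝ (k:ℤ)).eval t with hu
  have h1 : P * (P * c) = 1 := by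
    apply fh_unique
    intro r hr
    have h0 := hC t ht r hr
    have hpos : 0 < 1 - 2 * r * t + r ^ 2 := by
      rw [abs_lt] at hr
      obtain ⟨ht1, ht2⟩ := ht
      nlinarith [mul_nonneg (sub_nonneg.2 ht1) (sub_nonneg.2 ht2), sq_nonneg (r - t), sq_nonneg (r*t)]
    have h2 := fh_hasSum_P_mul _ t r _ (fh_hasSum_P_mul c t r _ (by
      simpa [hc, PowerSeries.coeff_mk] using h0))
    convert h2 using 1
    field_simp
  have expand : ∀ x : PowerSeries ℝ, P * x = x - PowerSeries.C (2 * t) * (PowerSeries.X * x)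
        + PowerSeries.X * (PowerSeries.X * x) := by intro x; rw [hP]; ring
  have co0 : ∀ x, PowerSeries.coeff 0 (P * x) = PowerSeries.coeff 0 x := by
    intro x
    rw [expand]
    simp
  have co1 : ∀ x, PowerSeries.coeff 1 (P * x)
      = PowerSeries.coeff 1 x - 2 * t * PowerSeries.coeff 0 x := by
    intro x
    rw [expand, map_add, map_sub, PowerSeries.coeff_C_mul, PowerSeries.coeff_succ_X_mul 0,
      PowerSeries.coeff_succ_X_mul 0]
    simp
  have co2 : ∀ x k, PowerSeries.coeff (k + 2) (P * x)
      = PowerSeries.coeff (k + 2) x - 2 * t * PowerSeries.coeff (k + 1) x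
        + PowerSeries.coeff k x := by
    intro x k
    rw [expand, map_add, map_sub, PowerSeries.coeff_C_mul, PowerSeries.coeff_succ_X_mul (k + 1),
      PowerSeries.coeff_succ_X_mul (k + 1), PowerSeries.coeff_succ_X_mul k]
  have h2 : P * u = 1 := by
    ext k
    rcases k with _ | _ | k
    · rw [co0]; simp [hu]
    · rw [zero_add, co1]
      simp [hu, PowerSeries.coeff_one]
    · rw [co2]
      have := congrArg (Polynomial.eval t) (U_add_two ℝ (k:ℤ))
      simp only [eval_sub, eval_mul, eval_ofNat, eval_X] at this
      simp [hu, PowerSeries.coeff_one]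
  have h3 : P * d = u := by
    ext k
    rcases k with _ | _ | k
    · rw [co0]; simp [hu, hd]
    · rw [zero_add, co1]
      have := congrArg (fun p => Polynomial.eval t (derivative p)) (U_add_two ℝ 0)
      simp [hu, hd] at this ⊢
      norm_num at this ⊢
      linarith
    · rw [co2]
      have := congrArg (fun p => Polynomial.eval t (derivative p)) (U_add_two ℝ ((k:ℤ)+1))
      simp only [derivative_sub, derivative_mul, derivative_X, derivative_ofNat, eval_sub,
        eval_add, eval_mul, eval_ofNat, eval_X, eval_zero, eval_one] at this
      simp only [hu, hd, PowerSeries.coeff_mk]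
      push_cast
      rw [show (k:ℤ) + 2 + 1 = k + 1 + 2 by ring, this,
        show (k:ℤ) + 1 + 1 = k + 2 by ring]
      simp only [zero_mul, mul_one, zero_add]
      ring
  have h4 : c = d := by
    calc c = (P * (P * d)) * c := by rw [h3, h2, one_mul]
      _ = (P * (P * c)) * d := by ring
      _ = d := by rw [h1, one_mul]
  have := congrArg (PowerSeries.coeff k) h4
  simpa [hc, hd] using this

open Polynomial in
lemma fh_ftc (p : Polynomial ℝ) :
    ∫ t in (-1:ℝ)..1, (derivative p).eval t = p.eval 1 - p.eval (-1) :=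
  intervalIntegral.integral_eq_sub_of_hasDerivAt (fun x _ => p.hasDerivAt x)
    ((derivative p).continuous.intervalIntegrable _ _)

open Polynomial.Chebyshev in
lemma fh_int_U (n : ℤ) :
    ∫ t in (-1:ℝ)..1, (U ℝ n).eval t = (1 + ((n.negOnePow : ℤ) : ℝ)) / ((n:ℝ) + 1) := by
  by_cases hn : n = -1
  · subst hn; simp
  have hn' : (n:ℝ) + 1 ≠ 0 := by
    intro h; apply hn; have : n + 1 = 0 := by exact_mod_cast h
    linarith
  have := fh_ftc (T ℝ (n+1))
  rw [T_derivative_eq_U, T_eval_one, T_eval_neg_one, Int.negOnePow_succ] at this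
  simp only [Polynomial.eval_mul, add_sub_cancel_right, Polynomial.eval_intCast,
    intervalIntegral.integral_const_mul] at this
  rw [eq_div_iff hn', mul_comm]
  push_cast at this
  linarith

open Polynomial Polynomial.Chebyshev in
lemma fh_int_main (n : ℤ) :
    ∫ t in (-1:ℝ)..1, (derivative (U ℝ n)).eval t / 2 * ((1 - t) ^ 2 * (1 + t) ^ 3)
     = -(1/32) * ∫ t in (-1:ℝ)..1, (5 * U ℝ (n+4) + 8 * U ℝ (n+3) - 4 * U ℝ (n+2) - 8 * U ℝ (n+1)
        - 2 * U ℝ n - 8 * U ℝ (n-1) - 4 * U ℝ (n-2) + 8 * U ℝ (n-3) + 5 * U ℝ (n-4)).eval t := by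
  have h := fh_ftc (U ℝ n * ((1 - X) ^ 2 * (1 + X) ^ 3))
  simp only [eval_mul, eval_pow, eval_sub, eval_add, eval_one, eval_X] at h
  rw [← intervalIntegral.integral_const_mul, ← sub_eq_zero, ← intervalIntegral.integral_sub]
  · rw [show (0:ℝ) = 1/2 * 0 by ring]
    rw [show (0:ℝ) = ∫ t in (-1:ℝ)..1, (derivative (U ℝ n * ((1 - X) ^ 2 * (1 + X) ^ 3))).eval t by
      rw [h]; norm_num]
    rw [← intervalIntegral.integral_const_mul]
    congr 1
    ext t
    have r4 := congrArg (Polynomial.eval t) (U_add_two ℝ (n+2))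
    have r3 := congrArg (Polynomial.eval t) (U_add_two ℝ (n+1))
    have r2 := congrArg (Polynomial.eval t) (U_add_two ℝ n)
    have r1 := congrArg (Polynomial.eval t) (U_sub_one ℝ n)
    have s2 := congrArg (Polynomial.eval t) (U_sub_two ℝ n)
    have s3 := congrArg (Polynomial.eval t) (U_sub_two ℝ (n-1))
    have s4 := congrArg (Polynomial.eval t) (U_sub_two ℝ (n-2))
    rw [show n + 2 + 2 = n + 4 by ring, show n + 2 + 1 = n + 3 by ring] at r4
    rw [show n + 1 + 2 = n + 3 by ring, show n + 1 + 1 = n + 2 by ring] at r3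
    rw [show n - 1 - 2 = n - 3 by ring, show n - 1 - 1 = n - 2 by ring] at s3
    rw [show n - 2 - 2 = n - 4 by ring, show n - 2 - 1 = n - 3 by ring] at s4
    simp only [eval_sub, eval_mul, eval_ofNat, eval_X] at r4 r3 r2 r1 s2 s3 s4
    simp [derivative_pow]
    rw [r4, r3, r2, s4, s3, s2, r1]
    ring
  · apply Continuous.intervalIntegrable
    fun_prop
  · apply Continuous.intervalIntegrable
    fun_prop

open Polynomial Polynomial.Chebyshev in
lemma fh_int_sum (n : ℤ) :
    ∫ t in (-1:ℝ)..1, (5 * U ℝ (n+4) + 8 * U ℝ (n+3) - 4 * U ℝ (n+2) - 8 * U ℝ (n+1)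
        - 2 * U ℝ n - 8 * U ℝ (n-1) - 4 * U ℝ (n-2) + 8 * U ℝ (n-3) + 5 * U ℝ (n-4)).eval t
    = (fun J : ℤ → ℝ => 5 * J (n+4) + 8 * J (n+3) - 4 * J (n+2) - 8 * J (n+1)
        - 2 * J n - 8 * J (n-1) - 4 * J (n-2) + 8 * J (n-3) + 5 * J (n-4))
        (fun n => ∫ t in (-1:ℝ)..1, (U ℝ n).eval t) := by
  have I : ∀ p : Polynomial ℝ, IntervalIntegrable (fun t => p.eval t) MeasureTheory.volume (-1) 1 :=
    fun p => p.continuous.intervalIntegrable _ _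
  have A : ∀ p q : Polynomial ℝ, ∫ t in (-1:ℝ)..1, (p + q).eval t
      = (∫ t in (-1:ℝ)..1, p.eval t) + ∫ t in (-1:ℝ)..1, q.eval t := by
    intro p q
    simp only [eval_add]
    exact intervalIntegral.integral_add (I p) (I q)
  have S : ∀ p q : Polynomial ℝ, ∫ t in (-1:ℝ)..1, (p - q).eval t
      = (∫ t in (-1:ℝ)..1, p.eval t) - ∫ t in (-1:ℝ)..1, q.eval t := by
    intro p q
    simp only [eval_sub]
    exact intervalIntegral.integral_sub (I p) (I q)
  simp only [A, S]
  simp only [eval_mul, eval_ofNat, intervalIntegral.integral_const_mul]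

open Polynomial Polynomial.Chebyshev in
lemma fh_int_value (k : ℕ) :
    ∫ t in (-1:ℝ)..1, (derivative (U ℝ ((k:ℤ)+1))).eval t / 2 * ((1 - t) ^ 2 * (1 + t) ^ 3)
     = if Even k then
            -8 * ((k : ℝ) + 2) /
              (((k : ℝ) - 1) * ((k : ℝ) + 1) * ((k : ℝ) + 3) * ((k : ℝ) + 5))
          else
            -8 * ((k : ℝ) + 1) * ((k : ℝ) + 3) /
              ((k : ℝ) * ((k : ℝ) - 2) * ((k : ℝ) + 2) * ((k : ℝ) + 4) * ((k : ℝ) + 6)) := by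
  rw [fh_int_main, fh_int_sum]
  simp only [fh_int_U]
  have hk0 : (0:ℝ) ≤ k := k.cast_nonneg
  split_ifs with hk
  · have hk' : Even (k:ℤ) := by exact_mod_cast hk
    have e0 : ((k:ℤ)).negOnePow = 1 := Int.negOnePow_even _ hk'
    have n1 : (k:ℝ) - 1 ≠ 0 := by
      intro h
      have : k = 1 := by exact_mod_cast (sub_eq_zero.1 h)
      subst this; revert hk; decide
    have o4 : ((k:ℤ) + 1 + 4).negOnePow = -1 := Int.negOnePow_odd _ (by grind)
    have o3 : ((k:ℤ) + 1 + 3).negOnePow = 1 := Int.negOnePow_even _ (by grind)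
    have o2 : ((k:ℤ) + 1 + 2).negOnePow = -1 := Int.negOnePow_odd _ (by grind)
    have o1 : ((k:ℤ) + 1 + 1).negOnePow = 1 := Int.negOnePow_even _ (by grind)
    have o0 : ((k:ℤ) + 1).negOnePow = -1 := Int.negOnePow_odd _ (by grind)
    have p4 : ((k:ℤ) + 1 - 4).negOnePow = -1 := Int.negOnePow_odd _ (by grind)
    have p3 : ((k:ℤ) + 1 - 3).negOnePow = 1 := Int.negOnePow_even _ (by grind)
    have p2 : ((k:ℤ) + 1 - 2).negOnePow = -1 := Int.negOnePow_odd _ (by grind)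
    have p1 : ((k:ℤ) + 1 - 1).negOnePow = 1 := Int.negOnePow_even _ (by grind)
    rw [o4, o3, o2, o1, o0, p1, p2, p3, p4]
    push_cast
    rw [show (k:ℝ) + 1 + 3 + 1 = k + 5 by ring, show (k:ℝ) + 1 + 1 + 1 = k + 3 by ring,
      show (k:ℝ) + 1 - 1 + 1 = k + 1 by ring, show (k:ℝ) + 1 - 3 + 1 = k - 1 by ring]
    have : (k:ℝ) + 1 ≠ 0 := by positivity
    have : (k:ℝ) + 3 ≠ 0 := by positivity
    have : (k:ℝ) + 5 ≠ 0 := by positivity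
    simp only [add_neg_cancel, zero_div, mul_zero]
    field_simp
    ring
  · have hk' : ¬ Even (k:ℤ) := by exact_mod_cast hk
    have n0 : (k:ℝ) ≠ 0 := by
      intro h
      have : k = 0 := by exact_mod_cast h
      subst this; revert hk; decide
    have n2 : (k:ℝ) - 2 ≠ 0 := by
      intro h
      have : k = 2 := by exact_mod_cast (sub_eq_zero.1 h)
      subst this; revert hk; decide
    have o4 : ((k:ℤ) + 1 + 4).negOnePow = 1 := Int.negOnePow_even _ (by grind)
    have o3 : ((k:ℤ) + 1 + 3).negOnePow = -1 := Int.negOnePow_odd _ (by grind)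
    have o2 : ((k:ℤ) + 1 + 2).negOnePow = 1 := Int.negOnePow_even _ (by grind)
    have o1 : ((k:ℤ) + 1 + 1).negOnePow = -1 := Int.negOnePow_odd _ (by grind)
    have o0 : ((k:ℤ) + 1).negOnePow = 1 := Int.negOnePow_even _ (by grind)
    have p4 : ((k:ℤ) + 1 - 4).negOnePow = 1 := Int.negOnePow_even _ (by grind)
    have p3 : ((k:ℤ) + 1 - 3).negOnePow = -1 := Int.negOnePow_odd _ (by grind)
    have p2 : ((k:ℤ) + 1 - 2).negOnePow = 1 := Int.negOnePow_even _ (by grind)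
    have p1 : ((k:ℤ) + 1 - 1).negOnePow = -1 := Int.negOnePow_odd _ (by grind)
    rw [o4, o3, o2, o1, o0, p1, p2, p3, p4]
    push_cast
    rw [show (k:ℝ) + 1 + 4 + 1 = k + 6 by ring, show (k:ℝ) + 1 + 2 + 1 = k + 4 by ring,
      show (k:ℝ) + 1 + 1 = k + 2 by ring,
      show (k:ℝ) + 1 - 2 + 1 = k by ring, show (k:ℝ) + 1 - 4 + 1 = k - 2 by ring]
    have : (k:ℝ) + 2 ≠ 0 := by positivity
    have : (k:ℝ) + 4 ≠ 0 := by positivity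
    have : (k:ℝ) + 6 ≠ 0 := by positivity
    simp only [add_neg_cancel, zero_div, mul_zero]
    field_simp
    ring

lemma fh_weight (t : ℝ) (ht : t ∈ Set.Icc (-1:ℝ) 1) :
    phi6 t * (1 - t ^ 2) ^ ((3:ℝ)/2) = 4 * ((1 - t) ^ 2 * (1 + t) ^ 3) := by
  obtain ⟨h1, h2⟩ := ht
  have a : 0 ≤ 1 - t := by linarith
  have b : 0 ≤ 1 + t := by linarith
  rw [phi6, show 1 - t ^ 2 = (1 - t) * (1 + t) by ring, Real.mul_rpow a b, Real.sqrt_eq_rpow]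
  have e1 : (1 - t) ^ ((1:ℝ)/2) * (1 - t) ^ ((3:ℝ)/2) = (1 - t) ^ 2 := by
    rw [← Real.rpow_add_of_nonneg a (by norm_num) (by norm_num)]; norm_num
  have e2 : (1 + t) ^ ((3:ℝ)/2) * (1 + t) ^ ((3:ℝ)/2) = (1 + t) ^ 3 := by
    rw [← Real.rpow_add_of_nonneg b (by norm_num) (by norm_num), ← Real.rpow_natCast]; norm_num
  rw [← e1, ← e2]; ring

open Polynomial Polynomial.Chebyshev in
lemma fh_C_one (C : ℕ → Polynomial ℝ) (hC : IsGegenbauer 2 C) (k : ℕ) :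
    (C k).eval 1 = ((k + 3).choose 3 : ℝ) := by
  rw [fh_C_eq C hC k 1 (by norm_num)]
  have h := derivative_U_eval_one (R := ℝ) ((k:ℤ)+1)
  push_cast at h
  have h2 : ((k+3).choose 3 : ℝ) * 6 = (k+3) * (k+2) * (k+1) := by
    have := Nat.descFactorial_eq_factorial_mul_choose (k+3) 3
    simp [Nat.descFactorial, Nat.factorial] at this
    have := congrArg (Nat.cast : ℕ → ℝ) this
    push_cast at this
    linarith
  linarith

lemma fh_first (C : ℕ → Polynomial ℝ) (hC : IsGegenbauer 2 C) (k : ℕ) :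
    1 / (4 * (8 * Real.pi ^ 2 / 3)) * ((k + 3).choose 3 : ℝ) * Lambda6 C k =
          if Even k then
            -8 * ((k : ℝ) + 2) /
              (((k : ℝ) - 1) * ((k : ℝ) + 1) * ((k : ℝ) + 3) * ((k : ℝ) + 5))
          else
            -8 * ((k : ℝ) + 1) * ((k : ℝ) + 3) /
              ((k : ℝ) * ((k : ℝ) - 2) * ((k : ℝ) + 2) * ((k : ℝ) + 4) * ((k : ℝ) + 6)) := by
  rw [← fh_int_value]
  have hc : ((k + 3).choose 3 : ℝ) ≠ 0 := by
    exact_mod_cast (Nat.choose_pos (by omega : 3 ≤ k + 3)).ne'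
  have : ∫ t in (-1:ℝ)..1, ((C k).eval t / (C k).eval 1) * phi6 t * (1 - t^2) ^ ((3:ℝ)/2)
      = ∫ t in (-1:ℝ)..1, (4 / ((k + 3).choose 3 : ℝ)) *
        ((Polynomial.derivative (Polynomial.Chebyshev.U ℝ ((k:ℤ)+1))).eval t / 2
          * ((1 - t) ^ 2 * (1 + t) ^ 3)) := by
    apply intervalIntegral.integral_congr
    intro t ht
    rw [Set.uIcc_of_le (by norm_num)] at ht
    simp only
    rw [mul_assoc, fh_weight t ht, fh_C_one C hC, fh_C_eq C hC k t ht]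
    ring
  rw [Lambda6, this, intervalIntegral.integral_const_mul]
  have := Real.pi_ne_zero
  field_simp

theorem funk_hecke_coefficients_dimension_six (C : ℕ → Polynomial ℝ)
    (hC : IsGegenbauer 2 C) :
    (∀ k : ℕ,
        1 / (4 * (8 * Real.pi ^ 2 / 3)) * ((k + 3).choose 3 : ℝ) * Lambda6 C k =
          if Even k then
            -8 * ((k : ℝ) + 2) /
              (((k : ℝ) - 1) * ((k : ℝ) + 1) * ((k : ℝ) + 3) * ((k : ℝ) + 5))
          else
            -8 * ((k : ℝ) + 1) * ((k : ℝ) + 3) /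
              ((k : ℝ) * ((k : ℝ) - 2) * ((k : ℝ) + 2) * ((k : ℝ) + 4) * ((k : ℝ) + 6))) ∧
      0 < Lambda6 C 0 ∧ 0 < Lambda6 C 1 ∧ ∀ k : ℕ, 2 ≤ k → Lambda6 C k < 0 := by
  have pos : ∀ k : ℕ, 0 < 1 / (4 * (8 * Real.pi ^ 2 / 3)) * ((k + 3).choose 3 : ℝ) := by
    intro k
    have hc : (0:ℝ) < ((k + 3).choose 3 : ℝ) := by
      exact_mod_cast (Nat.choose_pos (by omega : 3 ≤ k + 3))
    have := Real.pi_pos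
    positivity
  refine ⟨fh_first C hC, ?_, ?_, ?_⟩
  · refine pos_of_mul_pos_right ?_ (pos 0).le
    rw [fh_first C hC 0]
    norm_num
  · refine pos_of_mul_pos_right ?_ (pos 1).le
    rw [fh_first C hC 1]
    norm_num
  · intro k hk
    refine neg_of_mul_neg_right ?_ (pos k).le
    rw [fh_first C hC k]
    have hk2 : (2:ℝ) ≤ k := by exact_mod_cast hk
    split_ifs with he
    · apply div_neg_of_neg_of_pos
      · linarith
      · have : (0:ℝ) < k - 1 := by linarith
        positivity
    · have h3 : 3 ≤ k := by
        rcases Nat.lt_or_ge 2 k with h | h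
        · exact h
        · exfalso; apply he; rw [le_antisymm h hk]; decide
      have hk3 : (3:ℝ) ≤ k := by exact_mod_cast h3
      apply div_neg_of_neg_of_pos
      · nlinarith
      · have : (0:ℝ) < k - 2 := by linarith
        positivity
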